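/- For p = (p₁,p₂) ∈ ℝ² with p ≠ 0, set R̃(p) = M · R(p) · M, where M = (1/√2)·[[1,1,0],[1,−1,0],[0,0,√2]] and R(p) = (1/|p|)·[[|p|, 0, 0],[0, −p₁, −p₂],[0, p₂, −p₁]]. Then for every q ∈ ℝ² and every τ ∈ ℝ: R̃(p) · [ (τ + |p|²/2)·I + V_PJT(q₁,q₂) ] · R̃(p)ᵀ = (τ + |p|²/2)·I + V_PJT(−(p·q)/|p|, −(p∧q)/|p|), where p·q = p₁q₁ + p₂q₂ and p∧q = p₁q₂ − p₂q₁. In particular the conjugated matrix equals (τ + |p|²/2)·I − V_PJT((p·q)/|p|, (p∧q)/|p|). -/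

import Mathlib

open Matrix

/-- The pseudo Jahn–Teller potential: the real symmetric 3×3 matrix with rows
`(a, 0, b/√2)`, `(0, −a, b/√2)`, `(b/√2, b/√2, 0)`. -/
noncomputable def VPJT (a b : ℝ) : Matrix (Fin 3) (Fin 3) ℝ :=
  !![a, 0, b / Real.sqrt 2;
     0, -a, b / Real.sqrt 2;
     b / Real.sqrt 2, b / Real.sqrt 2, 0]

/-- The matrix `M = (1/√2)·[[1,1,0],[1,−1,0],[0,0,√2]]`. -/
noncomputable def Mmat : Matrix (Fin 3) (Fin 3) ℝ :=
  (1 / Real.sqrt 2) • !![1, 1, 0; 1, -1, 0; 0, 0, Real.sqrt 2]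

/-- `R(p) = (1/|p|)·[[|p|, 0, 0],[0, −p₁, −p₂],[0, p₂, −p₁]]`. -/
noncomputable def Rmat (p₁ p₂ : ℝ) : Matrix (Fin 3) (Fin 3) ℝ :=
  (1 / Real.sqrt (p₁ ^ 2 + p₂ ^ 2)) •
    !![Real.sqrt (p₁ ^ 2 + p₂ ^ 2), 0, 0; 0, -p₁, -p₂; 0, p₂, -p₁]

/-- `R̃(p) = M · R(p) · M`. -/
noncomputable def Rtilde (p₁ p₂ : ℝ) : Matrix (Fin 3) (Fin 3) ℝ :=
  Mmat * Rmat p₁ p₂ * Mmat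

/-!
`Mmat` is a symmetric orthogonal involution. In the basis formed by its columns, `VPJT q₁ q₂` is the
block matrix `[[0, qᵀ], [q, 0]]` and `Rtilde p₁ p₂` is `[[1, 0], [0, U]]` with `U` a rotation of the
plane, so conjugation replaces `q` by `U q`. In complex notation `U` is multiplication by
`-p̄ / |p|`, and `p̄ q = p·q + i (p∧q)`. Scalar matrices are fixed because `Rtilde p₁ p₂` is
orthogonal.
-/

section BlockMatrices

variable {n : ℕ} {R : Type*}

/-- The block matrix `[[0, vᵀ], [v, 0]]`, which is `VPJT` in the basis formed by the columns
of `Mmat`. -/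
def arrowhead [Zero R] (v : Fin n → R) : Matrix (Fin (n + 1)) (Fin (n + 1)) R :=
  of (Fin.cons (Fin.cons 0 v) fun i => Fin.cons (v i) 0)

/-- The block matrix `[[1, 0], [0, U]]`, the shape of `Rmat`. -/
def oneOplus [Zero R] [One R] (U : Matrix (Fin n) (Fin n) R) :
    Matrix (Fin (n + 1)) (Fin (n + 1)) R :=
  of (Fin.cons (Fin.cons 1 0) fun i => Fin.cons 0 (U i))

lemma arrowhead_fin_two [Zero R] (a b : R) :
    arrowhead ![a, b] = !![0, a, b; a, 0, 0; b, 0, 0] := by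
  ext i j
  fin_cases i <;> fin_cases j <;> rfl

lemma oneOplus_fin_two [Zero R] [One R] (a b c d : R) :
    oneOplus !![a, b; c, d] = !![1, 0, 0; 0, a, b; 0, c, d] := by
  ext i j
  fin_cases i <;> fin_cases j <;> rfl

lemma oneOplus_one [Zero R] [One R] : oneOplus (1 : Matrix (Fin n) (Fin n) R) = 1 := by
  ext i j
  cases i using Fin.cases <;> cases j using Fin.cases <;>
    simp [oneOplus, one_apply, eq_comm (a := (0 : Fin (n + 1)))]

lemma transpose_oneOplus [Zero R] [One R] (U : Matrix (Fin n) (Fin n) R) :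
    (oneOplus U)ᵀ = oneOplus Uᵀ := by
  ext i j
  cases i using Fin.cases <;> cases j using Fin.cases <;> simp [oneOplus]

lemma oneOplus_mul_oneOplus [NonAssocSemiring R] (U V : Matrix (Fin n) (Fin n) R) :
    oneOplus U * oneOplus V = oneOplus (U * V) := by
  ext i j
  cases i using Fin.cases <;> cases j using Fin.cases <;>
    simp [oneOplus, mul_apply, Fin.sum_univ_succ]

lemma oneOplus_mul_arrowhead_mul_transpose [NonAssocCommSemiring R]
    (U : Matrix (Fin n) (Fin n) R) (v : Fin n → R) :
    oneOplus U * arrowhead v * (oneOplus U)ᵀ = arrowhead (U *ᵥ v) := by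
  ext i j
  cases i using Fin.cases <;> cases j using Fin.cases <;>
    simp [oneOplus, arrowhead, mul_apply, Fin.sum_univ_succ, mulVec, dotProduct, mul_comm]

lemma oneOplus_mem_orthogonalGroup [CommRing R] {U : Matrix (Fin n) (Fin n) R}
    (hU : U ∈ orthogonalGroup (Fin n) R) : oneOplus U ∈ orthogonalGroup (Fin (n + 1)) R := by
  rw [mem_orthogonalGroup_iff] at hU ⊢
  rw [transpose_oneOplus, oneOplus_mul_oneOplus, hU, oneOplus_one]

end BlockMatrices

lemma mul_smul_one_add_mul_transpose_of_mem_orthogonalGroup {n R : Type*} [Fintype n]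
    [DecidableEq n] [CommRing R] {Q : Matrix n n R} (hQ : Q ∈ orthogonalGroup n R) (c : R)
    (A : Matrix n n R) :
    Q * (c • (1 : Matrix n n R) + A) * Qᵀ = c • (1 : Matrix n n R) + Q * A * Qᵀ := by
  rw [mul_add, add_mul, mul_smul_comm, mul_one, smul_mul_assoc,
    (mem_orthogonalGroup_iff n R).1 hQ]

lemma conj_mul_conj_of_mul_self_eq_one {G : Type*} [Monoid G] {m : G} (hm : m * m = 1)
    (a b : G) : m * a * m * (m * b * m) = m * (a * b) * m :=
  calc
    m * a * m * (m * b * m) = m * a * (m * m) * b * m := by simp only [mul_assoc]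
    _ = m * (a * b) * m := by rw [hm, mul_one, mul_assoc m a b]

lemma sqrt_sq_add_sq_ne_zero {a b : ℝ} (h : (a, b) ≠ (0, 0)) : √(a ^ 2 + b ^ 2) ≠ 0 := by
  contrapose! h
  rw [Real.sqrt_eq_zero (by positivity)] at h
  simp_all [add_eq_zero_iff_of_nonneg, sq_nonneg]

lemma div_sqrt_sq_add_div_sqrt_sq {a b : ℝ} (h : (a, b) ≠ (0, 0)) :
    (a / √(a ^ 2 + b ^ 2)) ^ 2 + (b / √(a ^ 2 + b ^ 2)) ^ 2 = 1 := by
  have hr : √(a ^ 2 + b ^ 2) ≠ 0 := sqrt_sq_add_sq_ne_zero h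
  have hr_sq : √(a ^ 2 + b ^ 2) ^ 2 = a ^ 2 + b ^ 2 := Real.sq_sqrt (by positivity)
  rw [div_pow, div_pow, ← add_div, hr_sq, div_self (hr_sq ▸ pow_ne_zero 2 hr)]

lemma transpose_Mmat : Mmatᵀ = Mmat := by
  ext i j
  fin_cases i <;> fin_cases j <;> simp [Mmat]

lemma Mmat_mul_Mmat : Mmat * Mmat = 1 := by
  have h_unscaled : !![1, 1, 0; 1, -1, 0; 0, 0, √2] * !![1, 1, 0; 1, -1, 0; 0, 0, √2] =
      (2 : ℝ) • (1 : Matrix (Fin 3) (Fin 3) ℝ) := by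
    ext i j
    fin_cases i <;> fin_cases j <;> simp [mul_apply, Fin.sum_univ_three, one_add_one_eq_two]
  have h_scale : 1 / √2 * (1 / √2) * 2 = 1 := by norm_num [← mul_inv]
  rw [Mmat, smul_mul_smul_comm, h_unscaled, smul_smul, h_scale, one_smul]

lemma Mmat_mem_orthogonalGroup : Mmat ∈ orthogonalGroup (Fin 3) ℝ := by
  rw [mem_orthogonalGroup_iff, transpose_Mmat, Mmat_mul_Mmat]

lemma VPJT_eq_Mmat_mul_arrowhead_mul_Mmat (a b : ℝ) :
    VPJT a b = Mmat * arrowhead ![a, b] * Mmat := by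
  have h_unscaled :
      !![1, 1, 0; 1, -1, 0; 0, 0, √2] * !![0, a, b; a, 0, 0; b, 0, 0] *
          !![1, 1, 0; 1, -1, 0; 0, 0, √2] =
        !![2 * a, 0, √2 * b; 0, -(2 * a), √2 * b; √2 * b, √2 * b, 0] := by
    ext i j
    fin_cases i <;> fin_cases j <;> simp [mul_apply, Fin.sum_univ_three, two_mul, mul_comm b]
  have h_scale : 1 / √2 * (1 / √2) = 2⁻¹ := by norm_num [← mul_inv]
  have hb : 2⁻¹ * (√2 * b) = b / √2 := by grind
  rw [Mmat, arrowhead_fin_two, smul_mul_assoc, smul_mul_smul_comm, h_unscaled, h_scale]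
  simp [VPJT, hb]

lemma VPJT_neg_neg (a b : ℝ) : VPJT (-a) (-b) = -VPJT a b := by
  simp [VPJT, neg_div]

/-- The rotation `q ↦ -p̄ q / |p|` of the plane, in complex notation: the lower right block
of `Rmat`. -/
noncomputable def negConjRotation (p₁ p₂ : ℝ) : Matrix (Fin 2) (Fin 2) ℝ :=
  !![-(p₁ / √(p₁ ^ 2 + p₂ ^ 2)), -(p₂ / √(p₁ ^ 2 + p₂ ^ 2));
     p₂ / √(p₁ ^ 2 + p₂ ^ 2), -(p₁ / √(p₁ ^ 2 + p₂ ^ 2))]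

lemma negConjRotation_mulVec (p₁ p₂ q₁ q₂ : ℝ) :
    negConjRotation p₁ p₂ *ᵥ ![q₁, q₂] =
      ![-((p₁ * q₁ + p₂ * q₂) / √(p₁ ^ 2 + p₂ ^ 2)),
        -((p₁ * q₂ - p₂ * q₁) / √(p₁ ^ 2 + p₂ ^ 2))] := by
  rw [negConjRotation, cons_mulVec, cons_mulVec, empty_mulVec, vec2_dotProduct', vec2_dotProduct']
  exact vec2_eq (by ring) (by ring)

lemma negConjRotation_mem_specialOrthogonalGroup {p₁ p₂ : ℝ} (hp : (p₁, p₂) ≠ (0, 0)) :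
    negConjRotation p₁ p₂ ∈ specialOrthogonalGroup (Fin 2) ℝ := by
  rw [negConjRotation, of_mem_specialOrthogonalGroup_fin_two_iff, neg_sq, neg_sq]
  exact ⟨rfl, rfl, div_sqrt_sq_add_div_sqrt_sq hp⟩

lemma Rmat_eq_oneOplus_negConjRotation {p₁ p₂ : ℝ} (hp : (p₁, p₂) ≠ (0, 0)) :
    Rmat p₁ p₂ = oneOplus (negConjRotation p₁ p₂) := by
  rw [negConjRotation, oneOplus_fin_two]
  simp [Rmat, sqrt_sq_add_sq_ne_zero hp, inv_mul_eq_div]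

lemma Rtilde_mem_orthogonalGroup {p₁ p₂ : ℝ} (hp : (p₁, p₂) ≠ (0, 0)) :
    Rtilde p₁ p₂ ∈ orthogonalGroup (Fin 3) ℝ := by
  have hU : negConjRotation p₁ p₂ ∈ orthogonalGroup (Fin 2) ℝ :=
    (negConjRotation_mem_specialOrthogonalGroup hp).1
  rw [Rtilde, Rmat_eq_oneOplus_negConjRotation hp]
  exact mul_mem (mul_mem Mmat_mem_orthogonalGroup (oneOplus_mem_orthogonalGroup hU))
    Mmat_mem_orthogonalGroup

lemma transpose_Rtilde (p₁ p₂ : ℝ) : (Rtilde p₁ p₂)ᵀ = Mmat * (Rmat p₁ p₂)ᵀ * Mmat := by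
  simp only [Rtilde, transpose_mul, transpose_Mmat, mul_assoc]

lemma Rtilde_mul_VPJT_mul_transpose {p₁ p₂ : ℝ} (hp : (p₁, p₂) ≠ (0, 0)) (q₁ q₂ : ℝ) :
    Rtilde p₁ p₂ * VPJT q₁ q₂ * (Rtilde p₁ p₂)ᵀ =
      VPJT (-((p₁ * q₁ + p₂ * q₂) / √(p₁ ^ 2 + p₂ ^ 2)))
        (-((p₁ * q₂ - p₂ * q₁) / √(p₁ ^ 2 + p₂ ^ 2))) :=
  calc
    _ = Mmat * (Rmat p₁ p₂ * arrowhead ![q₁, q₂] * (Rmat p₁ p₂)ᵀ) * Mmat := by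
      rw [transpose_Rtilde, Rtilde, VPJT_eq_Mmat_mul_arrowhead_mul_Mmat,
        conj_mul_conj_of_mul_self_eq_one Mmat_mul_Mmat,
        conj_mul_conj_of_mul_self_eq_one Mmat_mul_Mmat]
    _ = Mmat * arrowhead (negConjRotation p₁ p₂ *ᵥ ![q₁, q₂]) * Mmat := by
      rw [Rmat_eq_oneOplus_negConjRotation hp, oneOplus_mul_arrowhead_mul_transpose]
    _ = _ := by
      rw [negConjRotation_mulVec, VPJT_eq_Mmat_mul_arrowhead_mul_Mmat]

/-- For `p ≠ 0`, conjugation by `R̃(p)` turns `(τ + |p|²/2)·I + V_PJT(q)` into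
`(τ + |p|²/2)·I + V_PJT(−(p·q)/|p|, −(p∧q)/|p|)`, which equals
`(τ + |p|²/2)·I − V_PJT((p·q)/|p|, (p∧q)/|p|)`. -/
theorem Rtilde_conj_VPJT (p₁ p₂ : ℝ) (hp : (p₁, p₂) ≠ (0, 0)) (q₁ q₂ τ : ℝ) :
    Rtilde p₁ p₂ * ((τ + (p₁ ^ 2 + p₂ ^ 2) / 2) • (1 : Matrix (Fin 3) (Fin 3) ℝ)
        + VPJT q₁ q₂) * (Rtilde p₁ p₂)ᵀ =
      (τ + (p₁ ^ 2 + p₂ ^ 2) / 2) • (1 : Matrix (Fin 3) (Fin 3) ℝ)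
        + VPJT (-((p₁ * q₁ + p₂ * q₂) / Real.sqrt (p₁ ^ 2 + p₂ ^ 2)))
            (-((p₁ * q₂ - p₂ * q₁) / Real.sqrt (p₁ ^ 2 + p₂ ^ 2))) ∧
    Rtilde p₁ p₂ * ((τ + (p₁ ^ 2 + p₂ ^ 2) / 2) • (1 : Matrix (Fin 3) (Fin 3) ℝ)
        + VPJT q₁ q₂) * (Rtilde p₁ p₂)ᵀ =
      (τ + (p₁ ^ 2 + p₂ ^ 2) / 2) • (1 : Matrix (Fin 3) (Fin 3) ℝ)
        - VPJT ((p₁ * q₁ + p₂ * q₂) / Real.sqrt (p₁ ^ 2 + p₂ ^ 2))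
            ((p₁ * q₂ - p₂ * q₁) / Real.sqrt (p₁ ^ 2 + p₂ ^ 2)) := by
  rw [mul_smul_one_add_mul_transpose_of_mem_orthogonalGroup (Rtilde_mem_orthogonalGroup hp),
    Rtilde_mul_VPJT_mul_transpose hp]
  exact ⟨rfl, by rw [VPJT_neg_neg, ← sub_eq_add_neg]⟩
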